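/- arXiv:1910.07739 — 3 statements merged into one kernel-verified Lean document; each statement's English description precedes it below -/
import Mathlib

section
/- Let p be a prime number and n ≥ 1 an integer with p ∣ n. If F ∈ ℚ_p[X] is a monic irreducible factor of the n-th cyclotomic polynomial Φ_n over ℚ_p, then the polynomial F(X^p) (the expansion of F along X ↦ X^p) is irreducible in ℚ_p[X] and divides the (np)-th cyclotomic polynomial Φ_{np}. -/
open Polynomial

section Aux
variable {p : ℕ} [hp : Fact p.Prime]

/-- Norm of `p`. -/
lemma aux_norm_p : ‖(p : PadicAlgCl p)‖ = (p : ℝ)⁻¹ := by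
  have h := PadicAlgCl.norm_extends p (p : ℚ_[p])
  rw [Padic.norm_p] at h
  simpa using h

lemma aux_norm_one {x : PadicAlgCl p} {r : ℕ} (h : x ^ r = 1) (hr : r ≠ 0) : ‖x‖ = 1 := by
  have h2 : ‖x‖ ^ r = 1 := by rw [← norm_pow, h, norm_one]
  exact (pow_eq_one_iff_of_nonneg (norm_nonneg _) hr).mp h2

/-- The subring generated by `ω` over `ℤ_p`. -/
noncomputable abbrev auxR (ω : PadicAlgCl p) : Subalgebra ℤ_[p] (PadicAlgCl p) := Algebra.adjoin ℤ_[p] {ω}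

lemma aux_frob {m : ℕ} {ω : PadicAlgCl p} (hω : ω ^ m = 1) {f : ℕ} (hf : p ^ f ≡ 1 [MOD m])
    (x : PadicAlgCl p) (hx : x ∈ auxR ω) : ∃ y ∈ auxR ω, x ^ (p ^ f) = x + p * y := by
  have hpR : (p : PadicAlgCl p) ∈ auxR ω := natCast_mem _ p
  induction hx using Algebra.adjoin_induction with
  | mem x hx =>
    obtain rfl : x = ω := by simpa using hx
    refine ⟨0, zero_mem _, ?_⟩
    have : x ^ (p ^ f) = x ^ 1 := by
      rw [← pow_mod_orderOf, ← pow_mod_orderOf x 1]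
      exact congrArg (x ^ ·) (hf.of_dvd (orderOf_dvd_of_pow_eq_one hω))
    simpa using this
  | algebraMap a =>
    have h : (p : ℤ_[p]) ∣ a ^ (p ^ f) - a := by
      rw [← Ideal.mem_span_singleton, ← PadicInt.maximalIdeal_eq_span_p, ← PadicInt.ker_toZMod,
        RingHom.mem_ker]
      simp
    obtain ⟨b, hb⟩ := h
    refine ⟨algebraMap _ _ b, Subalgebra.algebraMap_mem _ _, ?_⟩
    rw [← map_pow, sub_eq_iff_eq_add.mp hb]
    simp [add_comm]
  | add x y hx hy ihx ihy =>
    obtain ⟨u, hu, hu'⟩ := ihx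
    obtain ⟨v, hv, hv'⟩ := ihy
    obtain ⟨r, hr⟩ := exists_add_pow_prime_pow_eq hp.out (⟨x, hx⟩ : auxR ω) ⟨y, hy⟩ f
    have hr' := congrArg (Subtype.val) hr
    simp only [Subalgebra.coe_pow, Subalgebra.coe_add, Subalgebra.coe_mul] at hr'
    refine ⟨u + v + x * y * r, add_mem (add_mem hu hv) (mul_mem (mul_mem hx hy) r.2), ?_⟩
    rw [hr', hu', hv']
    push_cast
    ring
  | mul x y hx hy ihx ihy =>
    obtain ⟨u, hu, hu'⟩ := ihx
    obtain ⟨v, hv, hv'⟩ := ihy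
    refine ⟨x * v + u * y + p * u * v, ?_, ?_⟩
    · exact add_mem (add_mem (mul_mem hx hv) (mul_mem hu hy)) (mul_mem (mul_mem hpR hu) hv)
    · rw [mul_pow, hu', hv']; ring

lemma aux_frob_iter {m : ℕ} {ω : PadicAlgCl p} (hω : ω ^ m = 1) {f : ℕ} (hf : p ^ f ≡ 1 [MOD m])
    (N : ℕ) (x : PadicAlgCl p) (hx : x ∈ auxR ω) :
    ∃ y ∈ auxR ω, x ^ (p ^ (f * N)) = x + p * y :=
  aux_frob hω (by simpa [pow_mul] using hf.pow N) x hx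

lemma aux_small (ω x : PadicAlgCl p) (hx : x ∈ auxR ω) (h1 : ‖x‖ < 1) :
    ∃ d : ℕ, ∃ y ∈ auxR ω, x ^ d = p * y := by
  set P := minpoly ℚ_[p] x with hP
  have hint : IsIntegral ℚ_[p] x := Algebra.IsIntegral.isIntegral x
  have hmon : P.Monic := minpoly.monic hint
  have hcoef : ∀ i < P.natDegree, ∃ b : ℤ_[p], P.coeff i = p * b := by
    intro i hi
    have h2 : spectralValueTerms P i ≤ ‖x‖ := by
      rw [← PadicAlgCl.spectralNorm_eq]
      exact le_ciSup (spectralValueTerms_bddAbove P) i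
    rw [spectralValueTerms_of_lt_natDegree _ hi] at h2
    have h3 : ‖P.coeff i‖ < 1 := by
      by_contra hcon
      push Not at hcon
      have : (i : ℝ) < P.natDegree := by exact_mod_cast hi
      have := Real.one_le_rpow hcon (z := 1 / (P.natDegree - i : ℝ))
        (by apply one_div_nonneg.mpr; linarith)
      linarith
    have h4 : (p : ℤ_[p]) ∣ (⟨P.coeff i, h3.le⟩ : ℤ_[p]) := by
      exact (PadicInt.norm_lt_one_iff_dvd _).mp h3
    obtain ⟨b, hb⟩ := h4
    refine ⟨b, ?_⟩
    have := congrArg (Subtype.val) hb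
    simpa using this
  choose! b hb using hcoef
  refine ⟨P.natDegree, - ∑ i ∈ Finset.range P.natDegree, algebraMap ℤ_[p] (PadicAlgCl p) (b i) * x ^ i,
    neg_mem (sum_mem fun i _ => mul_mem (Subalgebra.algebraMap_mem _ _) (pow_mem hx i)), ?_⟩
  have h0 := minpoly.aeval ℚ_[p] x
  rw [← hP, aeval_eq_sum_range, Finset.sum_range_succ, hmon.coeff_natDegree, one_smul] at h0
  rw [eq_neg_of_add_eq_zero_right h0, mul_neg, Finset.mul_sum]
  congr 1
  refine Finset.sum_congr rfl fun i hi => ?_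
  rw [hb i (Finset.mem_range.mp hi), Algebra.smul_def, map_mul, map_natCast, mul_assoc,
    IsScalarTower.algebraMap_apply ℤ_[p] ℚ_[p] (PadicAlgCl p)]
  rfl

lemma aux_dvd {m : ℕ} (hm : p.Coprime m) {ω : PadicAlgCl p} (hω : ω ^ m = 1)
    (x : PadicAlgCl p) (hx : x ∈ auxR ω) (h1 : ‖x‖ < 1) : ∃ y ∈ auxR ω, x = p * y := by
  obtain ⟨d, y, hy, hd⟩ := aux_small ω x hx h1
  have hf : p ^ (Nat.totient m) ≡ 1 [MOD m] := Nat.ModEq.pow_totient hm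
  have hf0 : p ^ (Nat.totient m + 0) ≡ 1 [MOD m] := hf
  by_cases hm0 : m = 0
  · subst hm0
    exact absurd hm (by simpa using hp.out.ne_one)
  obtain ⟨z, hz, hz'⟩ := aux_frob_iter hω hf d x hx
  have hle : d ≤ p ^ (Nat.totient m * d) :=
    (Nat.lt_pow_self hp.out.one_lt).le.trans (Nat.pow_le_pow_right hp.out.pos
      (Nat.le_mul_of_pos_left _ (Nat.totient_pos.mpr (Nat.pos_of_ne_zero hm0))))
  obtain ⟨e, he⟩ := Nat.exists_eq_add_of_le hle
  refine ⟨y * x ^ e - z, sub_mem (mul_mem hy (pow_mem hx e)) hz, ?_⟩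
  rw [he, pow_add, hd] at hz'
  linear_combination -hz'

lemma aux_norm_le_one {m : ℕ} (hm : m ≠ 0) {ω : PadicAlgCl p} (hω : ω ^ m = 1)
    (x : PadicAlgCl p) (hx : x ∈ auxR ω) : ‖x‖ ≤ 1 := by
  induction hx using Algebra.adjoin_induction with
  | mem x hx =>
    obtain rfl : x = ω := by simpa using hx
    exact (aux_norm_one hω hm).le
  | algebraMap a =>
    rw [IsScalarTower.algebraMap_apply ℤ_[p] ℚ_[p] (PadicAlgCl p), PadicAlgCl.norm_extends]
    exact a.2
  | add x y hx hy ihx ihy =>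
    exact (PadicAlgCl.isNonarchimedean p x y).trans (max_le ihx ihy)
  | mul x y hx hy ihx ihy =>
    rw [norm_mul]; exact mul_le_one₀ ihx (norm_nonneg _) ihy

lemma aux_norm_R {m : ℕ} (hm : p.Coprime m) (hm0 : m ≠ 0) {ω : PadicAlgCl p} (hω : ω ^ m = 1)
    (N : ℕ) : ∀ x ∈ auxR ω, ((p : ℝ)⁻¹) ^ N < ‖x‖ → ∃ a : ℤ, ‖x‖ = (p : ℝ) ^ a := by
  have hp0 : (0 : ℝ) < p := by exact_mod_cast hp.out.pos
  induction N with
  | zero =>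
    intro x hx h
    have := aux_norm_le_one hm0 hω x hx
    simp at h
    linarith
  | succ N ih =>
    intro x hx h
    rcases (aux_norm_le_one hm0 hω x hx).lt_or_eq with h1 | h1
    · obtain ⟨y, hy, rfl⟩ := aux_dvd hm hω x hx h1
      rw [norm_mul, aux_norm_p] at h ⊢
      rw [pow_succ'] at h
      obtain ⟨a, ha⟩ := ih y hy (lt_of_mul_lt_mul_left h (by positivity))
      refine ⟨a - 1, ?_⟩
      rw [ha, zpow_sub_one₀ hp0.ne', mul_comm]
    · exact ⟨0, by simpa using h1⟩

open IntermediateField in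
lemma aux_norm_L {m : ℕ} (hm : p.Coprime m) (hm0 : m ≠ 0) {ω : PadicAlgCl p} (hω : ω ^ m = 1)
    (x : PadicAlgCl p) (hx : x ∈ ℚ_[p]⟮ω⟯) (hx0 : x ≠ 0) : ∃ a : ℤ, ‖x‖ = (p : ℝ) ^ a := by
  have hp0 : (0 : ℝ) < p := by exact_mod_cast hp.out.pos
  have hpR : ∀ k : ℕ, (p : PadicAlgCl p) ^ k ∈ auxR ω := fun k => pow_mem (_root_.natCast_mem _ p) k
  have key : ∃ N : ℕ, (p : PadicAlgCl p) ^ N * x ∈ auxR ω := by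
    rw [← IntermediateField.mem_toSubalgebra,
      IntermediateField.adjoin_simple_toSubalgebra_of_isAlgebraic
        (Algebra.IsAlgebraic.isAlgebraic ω)] at hx
    clear hx0
    induction hx using Algebra.adjoin_induction with
    | mem x hx => exact ⟨0, by simpa using Algebra.subset_adjoin hx⟩
    | algebraMap a =>
      obtain ⟨N, b, hb⟩ : ∃ N : ℕ, ∃ b : ℤ_[p], (p : ℚ_[p]) ^ N * a = b := by
        obtain ⟨N, hN⟩ := exists_nat_gt ‖a‖
        have hN2 : (N : ℝ) < (p : ℝ) ^ N := by exact_mod_cast Nat.lt_pow_self hp.out.one_lt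
        refine ⟨N, ⟨(p : ℚ_[p]) ^ N * a, ?_⟩, rfl⟩
        rw [norm_mul, norm_pow, Padic.norm_p, inv_pow, inv_mul_le_one₀ (by positivity)]
        linarith
      refine ⟨N, ?_⟩
      have : (p : PadicAlgCl p) ^ N * algebraMap ℚ_[p] _ a = algebraMap ℤ_[p] _ b := by
        rw [IsScalarTower.algebraMap_apply ℤ_[p] ℚ_[p] (PadicAlgCl p)]
        change _ = algebraMap ℚ_[p] (PadicAlgCl p) (b : ℚ_[p])
        rw [← hb]; simp
      rw [this]
      exact Subalgebra.algebraMap_mem _ _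
    | add x y _ _ ihx ihy =>
      obtain ⟨M, hM⟩ := ihx
      obtain ⟨N, hN⟩ := ihy
      refine ⟨M + N, ?_⟩
      have := add_mem (mul_mem (hpR N) hM) (mul_mem (hpR M) hN)
      convert this using 1
      ring
    | mul x y _ _ ihx ihy =>
      obtain ⟨M, hM⟩ := ihx
      obtain ⟨N, hN⟩ := ihy
      refine ⟨M + N, ?_⟩
      convert mul_mem hM hN using 1
      ring
  obtain ⟨N, hN⟩ := key
  have hpA : (p : PadicAlgCl p) ≠ 0 := by exact_mod_cast hp.out.ne_zero
  have hpos : 0 < ‖(p : PadicAlgCl p) ^ N * x‖ :=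
    norm_pos_iff.mpr (mul_ne_zero (pow_ne_zero _ hpA) hx0)
  obtain ⟨M, hM⟩ := exists_pow_lt_of_lt_one hpos
    (inv_lt_one_of_one_lt₀ (by exact_mod_cast hp.out.one_lt : (1 : ℝ) < p))
  obtain ⟨a, ha⟩ := aux_norm_R hm hm0 hω M _ hN hM
  refine ⟨a + N, ?_⟩
  rw [norm_mul, norm_pow, aux_norm_p] at ha
  rw [zpow_add₀ hp0.ne', ← ha, zpow_natCast, inv_pow]
  field_simp

lemma aux_norm_root_le {r : ℕ} (hr : r ≠ 0) {μ ν : PadicAlgCl p} (hμ : IsPrimitiveRoot μ r)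
    (hν : ν ^ r = 1) : ‖1 - ν‖ ≤ ‖1 - μ‖ := by
  have : NeZero r := ⟨hr⟩
  obtain ⟨i, _, rfl⟩ := hμ.eq_pow_of_pow_eq_one hν
  rw [← mul_neg_geom_sum, norm_mul]
  refine mul_le_of_le_one_right (norm_nonneg _) ?_
  refine IsUltrametricDist.norm_sum_le_of_forall_le_of_nonneg zero_le_one fun j _ => ?_
  rw [norm_pow, aux_norm_one hμ.pow_eq_one hr, one_pow]

lemma aux_prod {r : ℕ} (hr : r ≠ 0) {μ : PadicAlgCl p} (hμ : IsPrimitiveRoot μ r)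
    (f : (PadicAlgCl p)[X]) (hf : f.Monic) (hd : f ∣ cyclotomic r (PadicAlgCl p)) :
    ‖f.eval 1‖ = ‖1 - μ‖ ^ f.natDegree := by
  have : NeZero (r : PadicAlgCl p) := ⟨by exact_mod_cast hr⟩
  have hs : f.Splits := IsAlgClosed.splits f
  rw [hs.eval_eq_prod_roots_of_monic hf, ← (splits_iff_card_roots.mp hs), ← Multiset.card_map
    (fun a => 1 - a)]
  have hall : ∀ a ∈ f.roots, ‖1 - a‖ = ‖1 - μ‖ := by
    intro a ha
    have ha' : IsPrimitiveRoot a r :=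
      isRoot_cyclotomic_iff.mp ((isRoot_of_mem_roots ha).dvd hd)
    exact le_antisymm (aux_norm_root_le hr hμ ha'.pow_eq_one)
      (aux_norm_root_le hr ha' hμ.pow_eq_one)
  generalize f.roots = s at hall
  induction s using Multiset.induction with
  | empty => simp
  | cons a s ih =>
    simp only [Multiset.map_cons, Multiset.prod_cons, Multiset.card_cons, norm_mul]
    rw [ih fun b hb => hall b (Multiset.mem_cons_of_mem hb), hall a (Multiset.mem_cons_self _ _),
      pow_succ']

lemma aux_degree (L : IntermediateField ℚ_[p] (PadicAlgCl p))
    (hL : ∀ x ∈ L, x ≠ 0 → ∃ a : ℤ, ‖x‖ = (p : ℝ) ^ a) {j : ℕ} {μ : PadicAlgCl p}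
    (hμ : IsPrimitiveRoot μ (p ^ (j + 1))) :
    Nat.totient (p ^ (j + 1)) ≤ (minpoly L μ).natDegree := by
  have hp0 : (0 : ℝ) < p := by exact_mod_cast hp.out.pos
  have hp1 : (1 : ℝ) < p := by exact_mod_cast hp.out.one_lt
  have hr : p ^ (j + 1) ≠ 0 := pow_ne_zero _ hp.out.ne_zero
  have hint : IsIntegral L μ := Algebra.IsIntegral.isIntegral μ
  have h1 := aux_prod hr hμ _ (cyclotomic.monic _ _) dvd_rfl
  rw [eval_one_cyclotomic_prime_pow, aux_norm_p, natDegree_cyclotomic] at h1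
  have hdiv : minpoly L μ ∣ cyclotomic (p ^ (j + 1)) L := by
    apply minpoly.dvd
    rw [aeval_def, ← eval_map, map_cyclotomic]
    exact hμ.isRoot_cyclotomic (Nat.pos_of_ne_zero hr)
  have h2 := aux_prod hr hμ ((minpoly L μ).map (algebraMap L (PadicAlgCl p)))
    ((minpoly.monic hint).map _) (by
      rw [← map_cyclotomic (p ^ (j + 1)) (algebraMap L (PadicAlgCl p))]
      exact Polynomial.map_dvd _ hdiv)
  rw [natDegree_map, eval_map, eval₂_at_one] at h2
  have hc0 : ‖1 - μ‖ ≠ 0 := by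
    intro h
    rw [h, zero_pow (Nat.totient_pos.mpr (Nat.pos_of_ne_zero hr)).ne'] at h1
    exact (inv_ne_zero hp0.ne') h1
  obtain ⟨a, ha⟩ := hL (algebraMap L (PadicAlgCl p) (eval 1 (minpoly L μ))) (by simp) (by
    rw [← norm_ne_zero_iff, h2]; exact pow_ne_zero _ hc0)
  rw [ha] at h2
  set D := (minpoly L μ).natDegree
  have hD : 0 < D := minpoly.natDegree_pos hint
  have h3 : (p : ℝ) ^ (a * (Nat.totient (p ^ (j + 1)) : ℤ)) = (p : ℝ) ^ (-(D : ℤ)) := by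
    rw [zpow_mul, h2, zpow_natCast, ← pow_mul, mul_comm, pow_mul, ← h1, zpow_neg, zpow_natCast,
      inv_pow]
  have h4 := zpow_right_injective₀ hp0 hp1.ne' h3
  have h5 : Nat.totient (p ^ (j + 1)) ∣ D := by
    zify
    exact ⟨-a, by linarith⟩
  exact Nat.le_of_dvd hD h5

open IntermediateField Module in
lemma aux_main {k m : ℕ} (hk : k ≠ 0) (hm : p.Coprime m) (hm0 : m ≠ 0) {η : PadicAlgCl p}
    (hη : IsPrimitiveRoot η (p ^ (k + 1) * m)) :
    p * (minpoly ℚ_[p] (η ^ p)).natDegree ≤ (minpoly ℚ_[p] η).natDegree := by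
  have hpp := hp.out.pos
  have hpos : 0 < p ^ (k + 1) * m := Nat.mul_pos (pow_pos hpp _) (Nat.pos_of_ne_zero hm0)
  set ω := η ^ (p ^ (k + 1)) with hω
  set μ := η ^ m with hμ
  have hωm : ω ^ m = 1 := by rw [hω, ← pow_mul, hη.pow_eq_one]
  have hμp : IsPrimitiveRoot μ (p ^ (k + 1)) := hη.pow hpos (mul_comm _ _)
  set L := ℚ_[p]⟮ω⟯ with hLdef
  have hLn := aux_norm_L hm hm0 hωm
  have hdeg := aux_degree L hLn hμp
  have hintQ : ∀ x : PadicAlgCl p, IsIntegral ℚ_[p] x := fun x => Algebra.IsIntegral.isIntegral x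
  have hintL : ∀ x : PadicAlgCl p, IsIntegral L x := fun x => Algebra.IsIntegral.isIntegral x
  have : FiniteDimensional ℚ_[p] L := adjoin.finiteDimensional (hintQ ω)
  have : FiniteDimensional ℚ_[p] ℚ_[p]⟮η⟯ := adjoin.finiteDimensional (hintQ η)
  have : FiniteDimensional L L⟮μ⟯ := adjoin.finiteDimensional (hintL μ)
  have : FiniteDimensional L L⟮μ ^ p⟯ := adjoin.finiteDimensional (hintL _)
  have : FiniteDimensional ℚ_[p] L⟮μ ^ p⟯ := FiniteDimensional.trans ℚ_[p] L _
  -- lower bound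
  have hlow : finrank ℚ_[p] L * Nat.totient (p ^ (k + 1)) ≤ (minpoly ℚ_[p] η).natDegree := by
    rw [← adjoin.finrank (hintQ η)]
    have hle : L⟮μ⟯.restrictScalars ℚ_[p] ≤ ℚ_[p]⟮η⟯ := by
      have hη' : η ∈ ℚ_[p]⟮η⟯ := mem_adjoin_simple_self _ _
      have hLle : L ≤ ℚ_[p]⟮η⟯ := adjoin_simple_le_iff.mpr (pow_mem hη' _)
      have : L⟮μ⟯ ≤ extendScalars hLle := adjoin_simple_le_iff.mpr (pow_mem hη' _)
      exact fun x hx => this hx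
    refine le_trans ?_ (finrank_le_of_le_right hle)
    calc _ ≤ finrank ℚ_[p] L * finrank L L⟮μ⟯ := by
            rw [adjoin.finrank (hintL μ)]; gcongr
      _ = finrank ℚ_[p] L⟮μ⟯ := finrank_mul_finrank _ _ _
      _ ≤ _ := le_rfl
  -- upper bound
  have hup : (minpoly ℚ_[p] (η ^ p)).natDegree ≤ finrank ℚ_[p] L * Nat.totient (p ^ k) := by
    have hmem : η ^ p ∈ L⟮μ ^ p⟯ := by
      have hω' : ω ∈ L⟮μ ^ p⟯ := by
        have := (L⟮μ ^ p⟯).algebraMap_mem ⟨ω, mem_adjoin_simple_self _ _⟩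
        simpa using this
      have hμ' : μ ^ p ∈ L⟮μ ^ p⟯ := mem_adjoin_simple_self _ _
      have hη0 : η ≠ 0 := hη.ne_zero hpos.ne'
      have hcop : IsCoprime ((p ^ k : ℕ) : ℤ) (m : ℤ) :=
        Nat.isCoprime_iff_coprime.mpr (hm.pow_left k)
      obtain ⟨u, v, huv⟩ := hcop
      have : η ^ p = ω ^ u * (μ ^ p) ^ v := by
        rw [hω, hμ, ← pow_mul]
        simp only [← zpow_natCast, ← zpow_mul]
        rw [← zpow_add₀ hη0]
        congr 1
        push_cast at huv ⊢
        linear_combination (-(p : ℤ)) * huv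
      rw [this]
      exact mul_mem (zpow_mem hω' _) (zpow_mem hμ' _)
    have h1 : (minpoly ℚ_[p] (η ^ p)).natDegree ≤ finrank ℚ_[p] L⟮μ ^ p⟯ := by
      have h2 := minpoly.natDegree_le (A := ℚ_[p]) (⟨η ^ p, hmem⟩ : L⟮μ ^ p⟯)
      have : IsScalarTower ℚ_[p] L⟮μ ^ p⟯ (PadicAlgCl p) :=
        IsScalarTower.of_algebraMap_eq fun x => rfl
      have h3 := minpoly.algebraMap_eq (A := ℚ_[p]) (B := L⟮μ ^ p⟯) (B' := PadicAlgCl p)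
        (FaithfulSMul.algebraMap_injective _ _) ⟨η ^ p, hmem⟩
      rw [← h3] at h2
      exact h2
    refine h1.trans ?_
    rw [← finrank_mul_finrank ℚ_[p] L L⟮μ ^ p⟯, adjoin.finrank (hintL _)]
    gcongr
    have hprim : IsPrimitiveRoot (μ ^ p) (p ^ k) := hμp.pow (pow_pos hpp _) (pow_succ' _ _)
    rw [← natDegree_cyclotomic (p ^ k) L]
    apply natDegree_le_of_dvd _ (cyclotomic_ne_zero _ _)
    apply minpoly.dvd
    rw [aeval_def, ← eval_map, map_cyclotomic]
    exact hprim.isRoot_cyclotomic (pow_pos hpp _)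
  have htot : Nat.totient (p ^ (k + 1)) = p * Nat.totient (p ^ k) := by
    rw [pow_succ', Nat.totient_mul_of_prime_of_dvd hp.out (dvd_pow_self _ hk)]
  calc _ ≤ p * (finrank ℚ_[p] L * Nat.totient (p ^ k)) := by gcongr
    _ = finrank ℚ_[p] L * Nat.totient (p ^ (k + 1)) := by rw [htot]; ring
    _ ≤ _ := hlow

end Aux

/-- Let `p` be a prime and `n ≥ 1` with `p ∣ n`. If `F` is a monic irreducible factor of the
`n`-th cyclotomic polynomial over `ℚ_p`, then `F(X^p)` is irreducible over `ℚ_p` and divides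
the `np`-th cyclotomic polynomial. -/
theorem expand_irreducible_factor_cyclotomic_of_dvd
    (p : ℕ) [Fact p.Prime] (n : ℕ) (hn : 1 ≤ n) (hpn : p ∣ n)
    (F : Polynomial ℚ_[p]) (hmonic : F.Monic) (hirr : Irreducible F)
    (hdvd : F ∣ cyclotomic n ℚ_[p]) :
    Irreducible (expand ℚ_[p] p F) ∧
      expand ℚ_[p] p F ∣ cyclotomic (n * p) ℚ_[p] := by
  have hp : p.Prime := Fact.out
  have hdvd2 : expand ℚ_[p] p F ∣ cyclotomic (n * p) ℚ_[p] := by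
    rw [← cyclotomic_expand_eq_cyclotomic hp hpn]
    exact _root_.map_dvd (expand ℚ_[p] p) hdvd
  refine ⟨?_, hdvd2⟩
  have hmon2 : (expand ℚ_[p] p F).Monic := hmonic.expand hp.pos
  have hdeg2 : (expand ℚ_[p] p F).natDegree = F.natDegree * p := natDegree_expand p F
  have hF0 : 0 < F.natDegree := hirr.natDegree_pos
  obtain ⟨η, hη⟩ := IsAlgClosed.exists_aeval_eq_zero (PadicAlgCl p) (expand ℚ_[p] p F) (by
    intro h
    have := natDegree_eq_of_degree_eq_some (n := 0) (by simpa using h)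
    rw [hdeg2] at this
    exact (Nat.mul_pos hF0 hp.pos).ne' this)
  have hnp : n * p ≠ 0 := (Nat.mul_pos hn hp.pos).ne'
  have hprim : IsPrimitiveRoot η (n * p) := by
    have : NeZero ((n * p : ℕ) : PadicAlgCl p) := ⟨by exact_mod_cast hnp⟩
    rw [← isRoot_cyclotomic_iff, ← map_cyclotomic _ (algebraMap ℚ_[p] (PadicAlgCl p)), IsRoot.def,
      eval_map, ← aeval_def]
    exact aeval_eq_zero_of_dvd_aeval_eq_zero hdvd2 hη
  have hFeq : F = minpoly ℚ_[p] (η ^ p) := by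
    apply minpoly.eq_of_irreducible_of_monic hirr _ hmonic
    rwa [expand_aeval] at hη
  obtain ⟨k, m, hpm, hnk⟩ := Nat.exists_eq_pow_mul_and_not_dvd (n := n) (by omega) p hp.ne_one
  have hk : k ≠ 0 := by
    rintro rfl
    exact hpm (by simpa [hnk] using hpn)
  have hm0 : m ≠ 0 := by
    rintro rfl
    simp at hpm
  have hprim' : IsPrimitiveRoot η (p ^ (k + 1) * m) := by
    convert hprim using 1
    rw [hnk]; ring
  have hmain := aux_main hk ((Nat.Prime.coprime_iff_not_dvd hp).mpr hpm) hm0 hprim'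
  rw [← hFeq] at hmain
  have hint : IsIntegral ℚ_[p] η := Algebra.IsIntegral.isIntegral η
  have heq : expand ℚ_[p] p F = minpoly ℚ_[p] η := by
    refine eq_of_monic_of_dvd_of_natDegree_le (minpoly.monic hint) hmon2
      (minpoly.dvd _ _ hη) ?_
    rw [hdeg2, mul_comm]
    exact hmain
  rw [heq]
  exact minpoly.irreducible hint
end

section
/- Let p be a prime number and n ≥ 1 an integer with p ∤ n. If F ∈ ℚ_p[X] is a monic irreducible factor of the n-th cyclotomic polynomial Φ_n over ℚ_p, then F(X) divides F(X^p) in ℚ_p[X], and the quotient polynomial F(X^p)/F(X) is irreducible in ℚ_p[X] and divides the (np)-th cyclotomic polynomial Φ_{np}. -/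
open Polynomial

theorem aux_complete {p : ℕ} [Fact p.Prime] {M : Type*} [AddCommGroup M] [Module ℤ_[p] M]
    {ι : Type*} [Finite ι] (b : Module.Basis ι ℤ_[p] M) :
    IsAdicComplete (IsLocalRing.maximalIdeal ℤ_[p]) M := by
  classical
  have : Fintype ι := Fintype.ofFinite ι
  have key : ∀ (n : ℕ) (x y : M), x ≡ y [SMOD
      ((IsLocalRing.maximalIdeal ℤ_[p]) ^ n • ⊤ : Submodule ℤ_[p] M)] ↔
      ∀ i, b.repr x i ≡ b.repr y i [SMOD
        ((IsLocalRing.maximalIdeal ℤ_[p]) ^ n • ⊤ : Submodule ℤ_[p] ℤ_[p])] := by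
    intro n x y
    simp only [SModEq.sub_mem, PadicInt.maximalIdeal_eq_span_p, Ideal.span_singleton_pow,
      Submodule.ideal_span_singleton_smul, Submodule.mem_smul_pointwise_iff_exists,
      Submodule.mem_top, true_and]
    constructor
    · rintro ⟨z, hz⟩ i
      exact ⟨b.repr z i, by simp [← Finsupp.sub_apply, ← map_sub, ← hz]⟩
    · intro h
      choose c hc using h
      refine ⟨∑ i, c i • b i, ?_⟩
      apply b.repr.injective
      ext i
      simp [Finsupp.single_apply, ← hc i, Module.Basis.repr_self]
  refine { haus' := ?_, prec' := ?_ }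
  · intro x hx
    apply b.repr.injective
    ext i
    simp only [map_zero, Finsupp.zero_apply]
    refine IsHausdorff.haus (I := IsLocalRing.maximalIdeal ℤ_[p]) inferInstance _ fun n => ?_
    simpa using (key n x 0).1 (hx n) i
  · intro f hf
    have h : ∀ i, ∃ L : ℤ_[p], ∀ n, b.repr (f n) i ≡ L [SMOD
        ((IsLocalRing.maximalIdeal ℤ_[p]) ^ n • ⊤ : Submodule ℤ_[p] ℤ_[p])] := fun i =>
      IsPrecomplete.prec (I := IsLocalRing.maximalIdeal ℤ_[p]) inferInstance
        (fun {m n} hmn => (key m _ _).1 (hf hmn) i)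
    choose L hL using h
    refine ⟨∑ i, L i • b i, fun n => (key n _ _).2 fun i => ?_⟩
    simpa [Finsupp.single_apply] using hL i n

theorem aux_irr {p : ℕ} [Fact p.Prime] (G : ℤ_[p][X]) (hG : G.Monic) (hGi : Irreducible G)
    (hsq : Squarefree (G.map (PadicInt.toZMod (p := p)))) :
    Irreducible (G.map (PadicInt.toZMod (p := p))) := by
  set φ := PadicInt.toZMod (p := p) with hφ
  have hdeg : 0 < G.natDegree := hG.natDegree_pos_of_not_isUnit hGi.not_isUnit
  have hGp : Prime G := hGi.prime
  have : IsDomain (AdjoinRoot G) := AdjoinRoot.isDomain_of_prime hGp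
  let b := AdjoinRoot.powerBasis' hG
  let I : Ideal (AdjoinRoot G) :=
    (IsLocalRing.maximalIdeal ℤ_[p]).map (algebraMap ℤ_[p] (AdjoinRoot G))
  have hc : IsAdicComplete I (AdjoinRoot G) :=
    (IsAdicComplete.map_algebraMap_iff _ _).2 (aux_complete b.basis)
  let ψ : AdjoinRoot G →+* AdjoinRoot (G.map φ) := AdjoinRoot.map φ G (G.map φ) dvd_rfl
  have hψ : ∀ A : ℤ_[p][X], ψ (AdjoinRoot.mk G A) = AdjoinRoot.mk (G.map φ) (A.map φ) := by
    intro A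
    induction A using Polynomial.induction_on' with
    | add f g hf hg => simp only [map_add, hf, hg, Polynomial.map_add]
    | monomial k a =>
      rw [← C_mul_X_pow_eq_monomial]
      simp [ψ]
  have hψI : ∀ x ∈ I, ψ x = 0 := by
    intro x hx
    have : I ≤ RingHom.ker ψ := by
      rw [Ideal.map_le_iff_le_comap]
      intro y hy
      rw [← PadicInt.ker_toZMod, RingHom.mem_ker] at hy
      rw [Ideal.mem_comap, RingHom.mem_ker]
      have hy : φ y = 0 := hy
      have := hψ (C y)
      rw [Polynomial.map_C, hy] at this
      simpa using this
    exact this hx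
  have hmem : ∀ A : ℤ_[p][X], A.map φ = 0 → AdjoinRoot.mk G A ∈ I := by
    intro A hA
    have h1 : A ∈ RingHom.ker (mapRingHom φ) := by simpa [RingHom.mem_ker] using hA
    rw [Polynomial.ker_mapRingHom, PadicInt.ker_toZMod] at h1
    have := Ideal.mem_map_of_mem (AdjoinRoot.mk G) h1
    rw [Ideal.map_map] at this
    exact this
  refine ⟨?_, ?_⟩
  · exact not_isUnit_of_natDegree_pos _ (by rwa [hG.natDegree_map])
  intro a c hac
  have hcop : IsCoprime a c := by
    rw [hac] at hsq
    exact (squarefree_mul_iff.1 hsq).1.isCoprime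
  obtain ⟨u, v, huv⟩ := hcop
  have hsurj : Function.Surjective (Polynomial.map φ) :=
    Polynomial.map_surjective _ (ZMod.ringHom_surjective _)
  obtain ⟨E, hE⟩ := hsurj (u * a)
  obtain ⟨W, hW⟩ := hsurj (u * v)
  set e₀ := AdjoinRoot.mk G E with he₀
  have h0 : e₀ ^ 2 - e₀ ∈ I := by
    have : e₀ ^ 2 - e₀ = AdjoinRoot.mk G (E ^ 2 - E + W * G) := by simp [e₀]
    rw [this]
    apply hmem
    simp only [Polynomial.map_add, Polynomial.map_sub, Polynomial.map_pow, Polynomial.map_mul, hE,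
      hW, hac]
    linear_combination (u * a) * huv
  obtain ⟨e, he, hee⟩ := HenselianRing.is_henselian (I := I) (X ^ 2 - X : (AdjoinRoot G)[X])
    (by monicity!) e₀ (by simpa using h0) (by
      apply IsUnit.of_mul_eq_one (Ideal.Quotient.mk I (2 * e₀ - 1))
      rw [← map_mul, ← map_one (Ideal.Quotient.mk I), Ideal.Quotient.eq]
      have := I.mul_mem_left 4 h0
      simp
      convert this using 1
      ring)
  have he' : e * (e - 1) = 0 := by
    have : e ^ 2 - e = 0 := by simpa using he
    linear_combination this
  have hfin : ψ e = AdjoinRoot.mk (G.map φ) (u * a) := by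
    have := hψI _ hee
    rw [map_sub, sub_eq_zero, he₀, hψ, hE] at this
    exact this
  rcases mul_eq_zero.1 he' with h | h
  · right
    rw [h, map_zero, eq_comm, AdjoinRoot.mk_eq_zero] at hfin
    have h2 : c ∣ u * a := (hac ▸ dvd_mul_left c a).trans hfin
    rw [isUnit_iff_dvd_one, ← huv]
    exact dvd_add h2 (dvd_mul_left _ _)
  · left
    rw [sub_eq_zero.1 h, map_one, ← map_one (AdjoinRoot.mk (G.map φ)), AdjoinRoot.mk_eq_mk] at hfin
    have h2 : a ∣ 1 - u * a := (hac ▸ dvd_mul_right a c).trans hfin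
    rw [isUnit_iff_dvd_one]
    exact (dvd_sub_left (dvd_mul_left _ _)).1 h2

theorem aux_core {p : ℕ} [hp : Fact p.Prime] (n : ℕ) (hpn : ¬ p ∣ n) (G : ℤ_[p][X])
    (hG : G.Monic) (hGi : Irreducible G) (hdvd : G ∣ cyclotomic n ℤ_[p]) :
    ∃ Q : ℤ_[p][X], expand ℤ_[p] p G = G * Q ∧ Q.Monic ∧ Irreducible Q ∧
      Q ∣ cyclotomic (n * p) ℤ_[p] := by
  set φ := PadicInt.toZMod (p := p) with hφ
  have hp1 := hp.out.one_lt
  have hn0 : NeZero (n : ZMod p) := ⟨by rwa [Ne, ZMod.natCast_eq_zero_iff]⟩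
  have hdeg : 0 < G.natDegree := hG.natDegree_pos_of_not_isUnit hGi.not_isUnit
  have hexp : ∀ A : ℤ_[p][X], (expand ℤ_[p] p A).map φ = (A.map φ) ^ p := by
    intro A
    rw [map_expand, ZMod.expand_card]
  obtain ⟨H, hH⟩ := hdvd
  have hsep : (cyclotomic n (ZMod p)).Separable := separable_cyclotomic n _
  have hGH : cyclotomic n (ZMod p) = G.map φ * H.map φ := by
    rw [← Polynomial.map_mul, ← hH, map_cyclotomic]
  have hcop : IsCoprime (G.map φ) (H.map φ) := by
    rw [hGH] at hsep
    exact hsep.isCoprime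
  have hGsep : (G.map φ).Separable := hsep.of_dvd ⟨_, hGH⟩
  have hbar : Irreducible (G.map φ) := aux_irr G hG hGi hGsep.squarefree
  have hGp : Prime G := hGi.prime
  have hfac : expand ℤ_[p] p G * expand ℤ_[p] p H = cyclotomic (n * p) ℤ_[p] * (G * H) := by
    rw [← map_mul, ← hH, cyclotomic_expand_eq_cyclotomic_mul hp.out hpn]
  have hGG : G ∣ expand ℤ_[p] p G := by
    have h1 : G ∣ expand ℤ_[p] p G * expand ℤ_[p] p H := by
      rw [hfac]; exact (dvd_mul_right G H).mul_left _
    rcases hGp.dvd_or_dvd h1 with h | h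
    · exact h
    · exfalso
      have h2 := Polynomial.map_dvd φ h
      rw [hexp] at h2
      exact hbar.not_isUnit ((hcop.pow_right (n := p)).isUnit_of_dvd' dvd_rfl h2)
  obtain ⟨Q, hQ⟩ := hGG
  have hQm : Q.Monic := by
    apply hG.of_mul_monic_left
    rw [← hQ]
    exact hG.expand hp.out.pos
  have hQbar : Q.map φ = (G.map φ) ^ (p - 1) := by
    have h1 := hexp G
    rw [hQ, Polynomial.map_mul] at h1
    apply mul_left_cancel₀ hbar.ne_zero
    rw [h1, ← pow_succ', Nat.sub_add_cancel hp1.le]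
  have hQi : Irreducible Q := by
    algebraize [φ]
    refine generalizedEisenstein (K := ZMod p) (q := G) (p := p - 1) hbar hG hQm.isPrimitive ?_ ?_ ?_ ?_
    · have := congrArg natDegree hQbar
      rw [hQm.natDegree_map, natDegree_pow, hG.natDegree_map] at this
      rw [this]
      exact Nat.mul_pos (by omega) hdeg
    · simp [hQm.leadingCoeff]
    · rw [hQm.leadingCoeff, map_one, C_1, one_mul]
      exact hQbar
    · intro h0
      have hker : RingHom.ker (algebraMap ℤ_[p] (ZMod p)) ^ 2 = Ideal.span {(p : ℤ_[p]) ^ 2} := by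
        rw [← Ideal.span_singleton_pow, ← PadicInt.maximalIdeal_eq_span_p, ← PadicInt.ker_toZMod]
        rfl
      rw [hker] at h0
      obtain ⟨r, hr⟩ : C ((p : ℤ_[p]) ^ 2) ∣ Q %ₘ G := by
        rw [C_dvd_iff_dvd_coeff]
        intro i
        have := congrArg (fun f => coeff f i) h0
        simp only [coeff_map, coeff_zero, Ideal.Quotient.eq_zero_iff_mem,
          Ideal.mem_span_singleton] at this
        exact this
      have hQr := modByMonic_add_div Q G
      rw [hr] at hQr
      have hder := congrArg derivative hQ
      rw [derivative_expand, derivative_mul] at hder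
      have h1 : G ∣ C (p : ℤ_[p]) * (expand ℤ_[p] p (derivative G) * X ^ (p - 1)
          - C (p : ℤ_[p]) * (r * derivative G)) := by
        refine ⟨derivative Q + derivative G * (Q /ₘ G), ?_⟩
        simp only [map_pow, map_natCast] at hQr hder ⊢
        linear_combination hder - derivative G * hQr
      have h2 : ¬ G ∣ C (p : ℤ_[p]) := by
        intro h
        have := natDegree_le_of_dvd h (by simp [hp.out.ne_zero])
        rw [natDegree_C] at this
        omega
      have h3 := Polynomial.map_dvd φ ((hGp.dvd_or_dvd h1).resolve_left h2)
      have h4 : G.map φ ∣ (derivative (G.map φ)) ^ p * X ^ (p - 1) := by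
        simpa [hexp, derivative_map] using h3
      rcases hbar.prime.dvd_or_dvd h4 with h | h
      · exact hbar.not_isUnit (hGsep.isUnit_of_dvd' dvd_rfl (hbar.prime.dvd_of_dvd_pow h))
      · have hX : G.map φ ∣ X := hbar.prime.dvd_of_dvd_pow h
        have hX1 : G.map φ ∣ X ^ n - 1 :=
          (Dvd.intro _ hGH.symm).trans (cyclotomic.dvd_X_pow_sub_one n _)
        have hn : n ≠ 0 := by rintro rfl; simp at hpn
        have := (dvd_sub_right (hX.trans (dvd_pow_self X hn))).1 hX1
        exact hbar.not_isUnit (isUnit_of_dvd_one this)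
  refine ⟨Q, hQ, hQm, hQi, ?_⟩
  have h1 : Q ∣ cyclotomic (n * p) ℤ_[p] * H := by
    refine ⟨expand ℤ_[p] p H, ?_⟩
    apply mul_left_cancel₀ hGp.ne_zero
    rw [hQ] at hfac
    linear_combination -hfac
  refine (hQi.prime.dvd_or_dvd h1).resolve_right fun h => ?_
  have h2 := Polynomial.map_dvd φ h
  rw [hQbar] at h2
  exact hbar.not_isUnit (hcop.isUnit_of_dvd' dvd_rfl ((dvd_pow_self _ (by omega)).trans h2))

/-- Let `p` be a prime and `n ≥ 1` with `p ∤ n`. If `F` is a monic irreducible factor of the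
`n`-th cyclotomic polynomial over `ℚ_p`, then `F(X)` divides `F(X^p)`, and the quotient
`F(X^p)/F(X)` is irreducible over `ℚ_p` and divides the `np`-th cyclotomic polynomial. -/
theorem expand_div_irreducible_factor_cyclotomic_of_not_dvd
    (p : ℕ) [Fact p.Prime] (n : ℕ) (hn : 1 ≤ n) (hpn : ¬ p ∣ n)
    (F : Polynomial ℚ_[p]) (hmonic : F.Monic) (hirr : Irreducible F)
    (hdvd : F ∣ cyclotomic n ℚ_[p]) :
    F ∣ expand ℚ_[p] p F ∧
      Irreducible (expand ℚ_[p] p F / F) ∧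
      expand ℚ_[p] p F / F ∣ cyclotomic (n * p) ℚ_[p] := by
  have hdvd' := hdvd
  rw [← map_cyclotomic n (algebraMap ℤ_[p] ℚ_[p])] at hdvd'
  obtain ⟨G, hGF⟩ := IsIntegrallyClosed.eq_map_mul_C_of_dvd ℚ_[p] (cyclotomic.monic n ℤ_[p]) hdvd'
  rw [hmonic.leadingCoeff, C_1, mul_one] at hGF
  have hinj : Function.Injective (algebraMap ℤ_[p] ℚ_[p]) := IsFractionRing.injective _ _
  have hG : G.Monic := by
    apply monic_of_injective hinj
    rw [hGF]; exact hmonic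
  have hGi : Irreducible G := by
    rw [hG.irreducible_iff_irreducible_map_fraction_map (K := ℚ_[p]), hGF]
    exact hirr
  have hGd : G ∣ cyclotomic n ℤ_[p] := by
    rw [← (cyclotomic.monic n ℤ_[p]).dvd_iff_fraction_map_dvd_fraction_map (K := ℚ_[p]) hG, hGF]
    exact hdvd'
  obtain ⟨Q, hQ, hQm, hQi, hQd⟩ := aux_core n hpn G hG hGi hGd
  have h1 : expand ℚ_[p] p F = F * Q.map (algebraMap ℤ_[p] ℚ_[p]) := by
    rw [← hGF, ← map_expand, hQ, Polynomial.map_mul]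
  have h2 : expand ℚ_[p] p F / F = Q.map (algebraMap ℤ_[p] ℚ_[p]) := by
    rw [h1, mul_div_cancel_left₀ _ hirr.ne_zero]
  rw [h2]
  refine ⟨Dvd.intro _ h1.symm, ?_, ?_⟩
  · exact (hQm.irreducible_iff_irreducible_map_fraction_map (K := ℚ_[p])).1 hQi
  · rw [← map_cyclotomic (n * p) (algebraMap ℤ_[p] ℚ_[p])]
    exact Polynomial.map_dvd _ hQd
end

section
/- Let p be a prime number and n ≥ 1 an integer. Suppose Φ_n = F_1 · F_2 ⋯ F_t is the factorization of the n-th cyclotomic polynomial into monic irreducible polynomials over ℚ_p. For each i set G_i = F_i(X^p) if p ∣ n, and G_i = F_i(X^p)/F_i(X) if p ∤ n. Then Φ_{np} = G_1 · G_2 ⋯ G_t, and this is the factorization of Φ_{np} into monic irreducible polynomials over ℚ_p. -/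
open Polynomial

lemma aux_eisenstein (p : ℕ) [hp : Fact p.Prime] (k : ℕ) {B L : Type*} [CommRing B] [IsDomain B]
    [Field L] [Algebra B L] [IsFractionRing B L] [IsIntegrallyClosed B] (P : Ideal B)
    (hP : P.IsPrime) (h1 : (p : B) ∈ P) (h2 : (p : B) ∉ P ^ 2) :
    Irreducible (cyclotomic (p ^ (k + 1)) L) := by
  have hE := cyclotomic_prime_pow_comp_X_add_one_isEisensteinAt p k
  set f : ℤ[X] := (cyclotomic (p ^ (k + 1)) ℤ).comp (X + 1) with hf
  have hfm : f.Monic := (cyclotomic.monic _ ℤ).comp_X_add_C 1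
  have hmap : f.map (Int.castRingHom B) = (cyclotomic (p ^ (k + 1)) B).comp (X + 1) := by
    simp [hf, Polynomial.map_comp]
  have hE' : (f.map (Int.castRingHom B)).IsEisensteinAt P := by
    refine (hfm.map _).isEisensteinAt_of_mem_of_notMem hP.ne_top ?_ ?_
    · intro n hn
      rw [hfm.natDegree_map] at hn
      have := hE.mem hn
      obtain ⟨c, hc⟩ := Ideal.mem_span_singleton.1 this
      rw [coeff_map, hc]
      simpa using P.mul_mem_right _ h1
    · rw [hmap, coeff_zero_eq_eval_zero]
      simpa [eval_comp, eval_one_cyclotomic_prime_pow] using h2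
  have hdeg : 0 < (f.map (Int.castRingHom B)).natDegree := by
    rw [hfm.natDegree_map, hf, natDegree_comp]
    have : (X + 1 : ℤ[X]).natDegree = 1 := by simpa using natDegree_X_add_C (1 : ℤ)
    rw [this, mul_one, natDegree_cyclotomic]
    exact Nat.totient_pos.2 (pow_pos hp.out.pos _)
  have hirr := hE'.irreducible hP (hfm.map _).isPrimitive hdeg
  rw [hmap] at hirr
  have h3 : Irreducible (cyclotomic (p ^ (k + 1)) B) := by
    have e := (MulEquiv.irreducible_iff (algEquivAevalXAddC (1 : B))
      (x := cyclotomic (p ^ (k + 1)) B)).1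
    apply e
    simpa [comp, aeval_def] using hirr
  have := ((cyclotomic.monic _ B).irreducible_iff_irreducible_map_fraction_map (K := L)).1 h3
  simpa using this

lemma aux_unram {A K L B : Type*} [CommRing A] [Field K] [CommRing B] [Field L]
    [Algebra A K] [Algebra B L] [Algebra A B] [Algebra K L] [Algebra A L]
    [IsScalarTower A K L] [IsScalarTower A B L]
    [IsFractionRing A K] [FiniteDimensional K L] [Algebra.IsSeparable K L]
    [IsIntegralClosure B A L] [IsFractionRing B L] [IsDedekindDomain A] [IsDedekindDomain B]
    [Module.IsTorsionFree A B] [Module.Finite A B] (x : B)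
    (hx : Algebra.adjoin K {algebraMap B L x} = ⊤) (m : ℕ) (hm : IsUnit (m : A)) (hm0 : m ≠ 0)
    (hxm : x ^ m = 1) (q : Ideal A) [q.IsMaximal] (hq : q ≠ ⊥) (P : Ideal B)
    (hP : P ^ 2 ∣ q.map (algebraMap A B)) : P = ⊤ := by
  have h1 := pow_sub_one_dvd_differentIdeal_aux A K L P two_ne_zero hq hP
  have h2 := aeval_derivative_mem_differentIdeal A K L x hx
  have hxi : IsIntegral A x := IsIntegralClosure.isIntegral A L x
  have hdvd : minpoly A x ∣ X ^ m - 1 := minpoly.isIntegrallyClosed_dvd hxi (by simp [hxm])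
  obtain ⟨g, hg⟩ := hdvd
  have h3 : (m : B) * x ^ (m - 1) = aeval x (derivative (minpoly A x)) * aeval x g := by
    have := congrArg (fun f => aeval x (derivative f)) hg
    simpa [derivative_mul, derivative_X_pow] using this
  have hux : IsUnit x := IsUnit.of_pow_eq_one hxm hm0
  have hu : IsUnit (aeval x (derivative (minpoly A x))) := by
    apply isUnit_of_mul_isUnit_left (y := aeval x g)
    rw [← h3]
    refine IsUnit.mul ?_ (hux.pow _)
    simpa using hm.map (algebraMap A B)
  have h4 := Ideal.eq_top_of_isUnit_mem _ h2 hu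
  rw [h4] at h1
  simpa [Ideal.dvd_iff_le] using h1

lemma aux_irr_s3 (p : ℕ) [hp : Fact p.Prime] (k : ℕ) (m : ℕ) (hm : ¬ p ∣ m) (L : Type*) [Field L]
    [Algebra ℚ_[p] L] [FiniteDimensional ℚ_[p] L] (z : L) (hz : z ^ m = 1)
    (hz' : Algebra.adjoin ℚ_[p] {z} = ⊤) : Irreducible (cyclotomic (p ^ (k + 1)) L) := by
  let : Algebra ℤ_[p] L := ((algebraMap ℚ_[p] L).comp (algebraMap ℤ_[p] ℚ_[p])).toAlgebra
  have : IsScalarTower ℤ_[p] ℚ_[p] L := IsScalarTower.of_algebraMap_eq (fun _ => rfl)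
  have hm0 : m ≠ 0 := by rintro rfl; simp at hm
  let B := integralClosure ℤ_[p] L
  have : IsDedekindDomain B := integralClosure.isDedekindDomain ℤ_[p] ℚ_[p] L
  have : IsFractionRing B L :=
    IsIntegralClosure.isFractionRing_of_finite_extension ℤ_[p] ℚ_[p] L B
  have : Module.Finite ℤ_[p] B := IsIntegralClosure.finite ℤ_[p] ℚ_[p] L B
  have : Module.IsTorsionFree ℤ_[p] L := .trans_faithfulSMul ℤ_[p] ℚ_[p] L
  have : Module.IsTorsionFree ℤ_[p] B := IsIntegralClosure.isTorsionFree ℤ_[p] L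
  have : Algebra.IsIntegral ℤ_[p] B := IsIntegralClosure.isIntegral_algebra ℤ_[p] L
  let q : Ideal ℤ_[p] := IsLocalRing.maximalIdeal ℤ_[p]
  have hqs : q = Ideal.span {(p : ℤ_[p])} := PadicInt.maximalIdeal_eq_span_p
  have hq : q ≠ ⊥ := by
    rw [hqs, Ne, Ideal.span_singleton_eq_bot]
    exact_mod_cast hp.out.ne_zero
  obtain ⟨P, hPm, hPq⟩ := Ideal.exists_ideal_over_maximal_of_isIntegral (S := B) q (by
    rw [(RingHom.injective_iff_ker_eq_bot _).1 (FaithfulSMul.algebraMap_injective ℤ_[p] B)]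
    exact bot_le)
  refine aux_eisenstein p k (B := B) P hPm.isPrime ?_ ?_
  · have : (p : ℤ_[p]) ∈ q := by rw [hqs]; exact Ideal.mem_span_singleton_self _
    rw [← hPq] at this
    simpa using this
  · intro h
    have hzi : IsIntegral ℤ_[p] z := by
      refine ⟨X ^ m - 1, monic_X_pow_sub_C 1 hm0, ?_⟩
      simp [hz]
    apply hPm.ne_top
    refine aux_unram (A := ℤ_[p]) (K := ℚ_[p]) (L := L) (B := B) ⟨z, hzi⟩ hz' m ?_ hm0 ?_ q hq P ?_
    · rw [PadicInt.isUnit_iff]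
      by_contra hne
      have := lt_of_le_of_ne (PadicInt.norm_le_one (m : ℤ_[p])) hne
      have h2 := (PadicInt.norm_int_lt_one_iff_dvd (p := p) (m : ℤ)).1 (by simpa using this)
      exact hm (by exact_mod_cast h2)
    · exact Subtype.ext (by simpa using hz)
    · rw [Ideal.dvd_iff_le, hqs, Ideal.map_span, Set.image_singleton, Ideal.span_singleton_le_iff_mem]
      simpa using h

lemma aux_unit (p : ℕ) [hp : Fact p.Prime] (m : ℕ) (hm : ¬ p ∣ m) : IsUnit (m : ℤ_[p]) := by
  rw [PadicInt.isUnit_iff]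
  by_contra hne
  have := lt_of_le_of_ne (PadicInt.norm_le_one (m : ℤ_[p])) hne
  have h2 := (PadicInt.norm_int_lt_one_iff_dvd (p := p) (m : ℤ)).1 (by simpa using this)
  exact hm (by exact_mod_cast h2)

lemma aux_frob_poly (p : ℕ) [hp : Fact p.Prime] (f : ℤ_[p][X]) :
    ∃ h : ℤ_[p][X], expand ℤ_[p] p f = f ^ p + C (p : ℤ_[p]) * h := by
  have h0 : C (p : ℤ_[p]) ∣ expand ℤ_[p] p f - f ^ p := by
    rw [C_dvd_iff_dvd_coeff]
    intro i
    rw [← Ideal.mem_span_singleton, ← PadicInt.maximalIdeal_eq_span_p, ← PadicInt.ker_toZMod,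
      RingHom.mem_ker, ← coeff_map]
    simp [map_expand, ZMod.expand_card]
  obtain ⟨h, hh⟩ := h0
  exact ⟨h, by rw [← hh]; ring⟩

lemma aux_frob_s3 (p : ℕ) [hp : Fact p.Prime] (m : ℕ) (hm : ¬ p ∣ m) (L : Type*) [Field L]
    [Algebra ℚ_[p] L] (z : L) (hz : z ^ m = 1) : aeval (z ^ p) (minpoly ℚ_[p] z) = 0 := by
  let : Algebra ℤ_[p] L := ((algebraMap ℚ_[p] L).comp (algebraMap ℤ_[p] ℚ_[p])).toAlgebra
  have : IsScalarTower ℤ_[p] ℚ_[p] L := IsScalarTower.of_algebraMap_eq (fun _ => rfl)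
  have hm0 : m ≠ 0 := by rintro rfl; simp at hm
  have hzi : IsIntegral ℤ_[p] z := by
    refine ⟨X ^ m - 1, monic_X_pow_sub_C 1 hm0, ?_⟩
    simp [hz]
  rw [minpoly.isIntegrallyClosed_eq_field_fractions' ℚ_[p] hzi, aeval_map_algebraMap]
  by_contra hne
  have : Module.IsTorsionFree ℤ_[p] L := .trans_faithfulSMul ℤ_[p] ℚ_[p] L
  obtain ⟨g, hg⟩ : minpoly ℤ_[p] z ∣ X ^ m - 1 :=
    minpoly.isIntegrallyClosed_dvd hzi (by simp [hz])
  set f := minpoly ℤ_[p] z with hf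
  have hfz : aeval z f = 0 := minpoly.aeval _ _
  have hzp : (z ^ p) ^ m = 1 := by rw [← pow_mul, mul_comm, pow_mul, hz, one_pow]
  have hgz : aeval (z ^ p) g = 0 := by
    have := congrArg (aeval (z ^ p)) hg
    simp only [map_sub, map_pow, aeval_X, hzp, map_one, sub_self, map_mul] at this
    exact (mul_eq_zero.1 this.symm).resolve_left hne
  have h3 : (m : L) * (z ^ p) ^ (m - 1) = aeval (z ^ p) f * aeval (z ^ p) (derivative g) := by
    have := congrArg (fun f => aeval (z ^ p) (derivative f)) hg
    simpa [derivative_mul, derivative_X_pow, hgz] using this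
  obtain ⟨h, hh⟩ := aux_frob_poly p f
  have h4 : aeval (z ^ p) f = p * aeval z h := by
    have := congrArg (aeval z) hh
    simpa [expand_aeval, hfz, hp.out.ne_zero] using this
  obtain ⟨v, hv⟩ := (aux_unit p m hm).exists_left_inv
  have hv' : algebraMap ℤ_[p] L v * (m : L) = 1 := by
    have := congrArg (algebraMap ℤ_[p] L) hv
    simpa using this
  have h5 : (p : L) * (algebraMap ℤ_[p] L v * z ^ p * aeval z h * aeval (z ^ p) (derivative g))
      = 1 := by
    have h6 : (z ^ p) ^ (m - 1) * z ^ p = 1 := by rw [pow_sub_one_mul hm0, hzp]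
    rw [h4] at h3
    linear_combination (-algebraMap ℤ_[p] L v * z ^ p) * h3 + h6 + ((z ^ p) ^ (m - 1) * z ^ p) * hv'
  have hint : IsIntegral ℤ_[p]
      (algebraMap ℤ_[p] L v * z ^ p * aeval z h * aeval (z ^ p) (derivative g)) :=
    ((isIntegral_algebraMap.mul (hzi.pow p)).mul (IsIntegral.of_mem_of_fg _
      hzi.fg_adjoin_singleton _ (aeval_mem_adjoin_singleton _ _))).mul
      (IsIntegral.of_mem_of_fg _ (hzi.pow p).fg_adjoin_singleton _ (aeval_mem_adjoin_singleton _ _))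
  have hpL : (p : ℚ_[p]) ≠ 0 := by exact_mod_cast hp.out.ne_zero
  have h7 := eq_inv_of_mul_eq_one_right h5
  have h8 : IsIntegral ℤ_[p] (algebraMap ℚ_[p] L (p : ℚ_[p])⁻¹) := by
    rw [map_inv₀, map_natCast, ← h7]; exact hint
  have h9 : IsIntegral ℤ_[p] (p : ℚ_[p])⁻¹ :=
    (isIntegral_algebraMap_iff (algebraMap ℚ_[p] L).injective).1 h8
  obtain ⟨y, hy⟩ := IsIntegrallyClosed.isIntegral_iff.1 h9
  have h10 : (p : ℤ_[p]) * y = 1 := by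
    apply IsFractionRing.injective ℤ_[p] ℚ_[p]
    rw [map_mul, hy, map_natCast, map_one, mul_inv_cancel₀ hpL]
  exact PadicInt.prime_p.not_isUnit (IsUnit.of_mul_eq_one _ h10)

open IntermediateField in
lemma aux_deg (p : ℕ) [hp : Fact p.Prime] (m : ℕ) (hm : ¬ p ∣ m) (L : Type*) [Field L]
    [Algebra ℚ_[p] L] (k : ℕ) (w : L) (hw : IsPrimitiveRoot w (p ^ k * m)) :
    (minpoly ℚ_[p] w).natDegree =
      (minpoly ℚ_[p] (w ^ p ^ k)).natDegree * Nat.totient (p ^ k) := by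
  rcases k with _ | k
  · simp
  have hm0 : m ≠ 0 := by rintro rfl; simp at hm
  have hpk : p ^ (k + 1) ≠ 0 := pow_ne_zero _ hp.out.ne_zero
  have hN : 0 < p ^ (k + 1) * m := Nat.pos_of_ne_zero (mul_ne_zero hpk hm0)
  have hw0 : w ≠ 0 := hw.ne_zero hN.ne'
  have hint : ∀ (y : L) (r : ℕ), r ≠ 0 → y ^ r = 1 → IsIntegral ℚ_[p] y := fun y r hr hy =>
    ⟨X ^ r - 1, monic_X_pow_sub_C 1 hr, by simp [hy]⟩
  have hwi : IsIntegral ℚ_[p] w := hint w _ hN.ne' hw.pow_eq_one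
  set z := w ^ p ^ (k + 1) with hzdef
  have hzm : z ^ m = 1 := by rw [hzdef, ← pow_mul, hw.pow_eq_one]
  have hzi : IsIntegral ℚ_[p] z := hint z m hm0 hzm
  have hxi : IsPrimitiveRoot (w ^ m) (p ^ (k + 1)) := hw.pow hN (mul_comm _ _)
  let E := ℚ_[p]⟮z⟯
  have : FiniteDimensional ℚ_[p] E := adjoin.finiteDimensional hzi
  have hirr : Irreducible (cyclotomic (p ^ (k + 1)) E) := by
    refine aux_irr_s3 p k m hm E (AdjoinSimple.gen ℚ_[p] z) (Subtype.ext (by simpa using hzm)) ?_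
    simpa using (adjoin.powerBasis hzi).adjoin_gen_eq_top
  have : CharZero L := charZero_of_injective_algebraMap (algebraMap ℚ_[p] L).injective
  have : NeZero ((p ^ (k + 1) : ℕ) : L) := ⟨by exact_mod_cast hpk⟩
  have hmin : minpoly E (w ^ m) = cyclotomic (p ^ (k + 1)) E := by
    refine (minpoly.eq_of_irreducible_of_monic hirr ?_ (cyclotomic.monic _ _)).symm
    have := isRoot_cyclotomic_iff.2 hxi
    rw [aeval_def, eval₂_eq_eval_map, map_cyclotomic]
    exact this
  have hEw : E⟮w⟯ = E⟮w ^ m⟯ := by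
    apply le_antisymm
    · rw [adjoin_simple_le_iff]
      have hco : IsCoprime ((p ^ (k + 1) : ℕ) : ℤ) (m : ℤ) := by
        rw [Nat.isCoprime_iff_coprime]
        exact Nat.Coprime.pow_left _ ((Nat.Prime.coprime_iff_not_dvd hp.out).2 hm)
      obtain ⟨a, b, hab⟩ := hco
      have e : w = z ^ a * (w ^ m) ^ b := by
        rw [hzdef, ← zpow_natCast, ← zpow_natCast, ← zpow_mul, ← zpow_mul, ← zpow_add₀ hw0,
          mul_comm _ a, mul_comm _ b, hab, zpow_one]
      have hmem : z ^ a * (w ^ m) ^ b ∈ E⟮w ^ m⟯ := by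
        refine mul_mem (zpow_mem ?_ _) (zpow_mem (mem_adjoin_simple_self _ _) _)
        exact (E⟮w ^ m⟯).algebraMap_mem (AdjoinSimple.gen ℚ_[p] z)
      rwa [← e] at hmem
    · rw [adjoin_simple_le_iff]
      exact pow_mem (mem_adjoin_simple_self _ _) _
  have hKw : (E⟮w⟯).restrictScalars ℚ_[p] = ℚ_[p]⟮w⟯ := by
    rw [adjoin_simple_adjoin_simple]
    apply le_antisymm
    · rw [adjoin_le_iff]
      rintro y (rfl | rfl)
      · exact pow_mem (mem_adjoin_simple_self _ _) _
      · exact mem_adjoin_simple_self _ _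
    · rw [adjoin_simple_le_iff]
      exact subset_adjoin _ _ (by simp)
  have hwm : IsIntegral E (w ^ m) := (hwi.pow m).tower_top
  have f1 : Module.finrank E E⟮w⟯ = Nat.totient (p ^ (k + 1)) := by
    rw [hEw, adjoin.finrank hwm, hmin, natDegree_cyclotomic]
  have f2 : Module.finrank ℚ_[p] E⟮w⟯ = (minpoly ℚ_[p] w).natDegree := by
    rw [← adjoin.finrank hwi, ← hKw]; rfl
  rw [← f2, ← f1, ← adjoin.finrank hzi]
  exact (Module.finrank_mul_finrank ℚ_[p] E E⟮w⟯).symm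

/-- Let `p` be a prime and `n ≥ 1`. Suppose `Φ_n = F_1 ⋯ F_t` is the factorization of the
`n`-th cyclotomic polynomial into monic irreducible polynomials over `ℚ_p`. For each `i` set
`G_i = F_i(X^p)` if `p ∣ n` and `G_i = F_i(X^p)/F_i(X)` otherwise. Then
`Φ_{np} = G_1 ⋯ G_t` is the factorization of `Φ_{np}` into monic irreducible polynomials
over `ℚ_p`. -/
theorem cyclotomic_mul_p_factorization
    (p : ℕ) [Fact p.Prime] (n : ℕ) (hn : 1 ≤ n) (t : ℕ)
    (F : Fin t → Polynomial ℚ_[p])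
    (hmonic : ∀ i, (F i).Monic) (hirr : ∀ i, Irreducible (F i))
    (hfact : cyclotomic n ℚ_[p] = ∏ i, F i)
    (G : Fin t → Polynomial ℚ_[p])
    (hG : ∀ i, G i = if p ∣ n then expand ℚ_[p] p (F i)
      else expand ℚ_[p] p (F i) / F i) :
    cyclotomic (n * p) ℚ_[p] = ∏ i, G i ∧
      (∀ i, (G i).Monic) ∧ (∀ i, Irreducible (G i)) := by
  have hp : p.Prime := Fact.out
  have hdvdF : ∀ i, F i ∣ cyclotomic n ℚ_[p] := fun i => by
    rw [hfact]; exact Finset.dvd_prod_of_mem F (Finset.mem_univ i)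
  have hGF : ∀ i, (p ∣ n ∧ G i = expand ℚ_[p] p (F i)) ∨
      (¬ p ∣ n ∧ G i * F i = expand ℚ_[p] p (F i)) := by
    intro i
    by_cases h : p ∣ n
    · left; exact ⟨h, by rw [hG, if_pos h]⟩
    · right
      refine ⟨h, ?_⟩
      rw [hG, if_neg h, mul_comm]
      refine EuclideanDomain.mul_div_cancel' (hirr i).ne_zero ?_
      obtain ⟨α, hα⟩ := IsAlgClosed.exists_aeval_eq_zero (AlgebraicClosure ℚ_[p]) (F i)
        (degree_pos_of_irreducible (hirr i)).ne'
      have hmin := minpoly.eq_of_irreducible_of_monic (hirr i) hα (hmonic i)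
      have hαn : α ^ n = 1 := by
        obtain ⟨g, hg⟩ := (hdvdF i).trans (cyclotomic.dvd_X_pow_sub_one n ℚ_[p])
        have := congrArg (aeval α) hg
        simpa [hα, sub_eq_zero] using this
      have := aux_frob_s3 p n h _ α hαn
      rw [← hmin] at this
      conv_lhs => rw [hmin]
      apply minpoly.dvd
      rw [expand_aeval, this]
  have hGm : ∀ i, (G i).Monic := by
    intro i
    rcases hGF i with ⟨-, h⟩ | ⟨-, h⟩
    · rw [h]; exact (hmonic i).expand hp.pos
    · exact (hmonic i).of_mul_monic_right (h ▸ (hmonic i).expand hp.pos)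
  have hprod : cyclotomic (n * p) ℚ_[p] = ∏ i, G i := by
    by_cases h : p ∣ n
    · rw [← cyclotomic_expand_eq_cyclotomic hp h, hfact, map_prod]
      exact Finset.prod_congr rfl fun i _ => by rw [hG, if_pos h]
    · have h1 := cyclotomic_expand_eq_cyclotomic_mul hp h ℚ_[p]
      apply mul_right_cancel₀ (cyclotomic_ne_zero n ℚ_[p])
      rw [← h1, hfact, map_prod, ← Finset.prod_mul_distrib]
      exact Finset.prod_congr rfl fun i _ => by
        rcases hGF i with ⟨h', -⟩ | ⟨-, h'⟩
        · exact absurd h' h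
        · rw [h']
  refine ⟨hprod, hGm, fun i => ?_⟩
  obtain ⟨a, m, hm, hnm⟩ := Nat.exists_eq_pow_mul_and_not_dvd (n := n) (by omega) p hp.ne_one
  have hdeg : (G i).natDegree * Nat.totient (p ^ a) =
      (F i).natDegree * Nat.totient (p ^ (a + 1)) := by
    rcases hGF i with ⟨h, h'⟩ | ⟨h, h'⟩
    · have ha : a ≠ 0 := by
        rintro rfl
        rw [pow_zero, one_mul] at hnm
        exact hm (hnm ▸ h)
      obtain ⟨b, rfl⟩ := Nat.exists_eq_succ_of_ne_zero ha
      rw [h', natDegree_expand, Nat.totient_prime_pow_succ hp, Nat.totient_prime_pow_succ hp]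
      rw [pow_succ]
      ring
    · have ha : a = 0 := by
        by_contra ha
        exact h (hnm ▸ (dvd_pow_self p ha).mul_right m)
      subst ha
      have h2 := congrArg natDegree h'
      rw [(hGm i).natDegree_mul (hmonic i), natDegree_expand] at h2
      simp only [pow_zero, Nat.totient_one, mul_one, zero_add, pow_one, Nat.totient_prime hp]
      rw [Nat.mul_sub_one]
      omega
  have hGpos : 0 < (G i).natDegree := by
    have h1 : 0 < (F i).natDegree := (hirr i).natDegree_pos
    have h2 : 0 < Nat.totient (p ^ (a + 1)) := Nat.totient_pos.2 (pow_pos hp.pos _)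
    exact Nat.pos_of_mul_pos_right (hdeg ▸ Nat.mul_pos h1 h2)
  obtain ⟨η, hη⟩ := IsAlgClosed.exists_aeval_eq_zero (AlgebraicClosure ℚ_[p]) (G i)
    (natDegree_pos_iff_degree_pos.1 hGpos).ne'
  have hηF : aeval (η ^ p) (F i) = 0 := by
    rw [← expand_aeval]
    rcases hGF i with ⟨-, h⟩ | ⟨-, h⟩
    · rw [← h, hη]
    · rw [← h, map_mul, hη, zero_mul]
  have : CharZero (AlgebraicClosure ℚ_[p]) :=
    charZero_of_injective_algebraMap (algebraMap ℚ_[p] _).injective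
  have hnp : n * p ≠ 0 := mul_ne_zero (by omega) hp.ne_zero
  have : NeZero ((n * p : ℕ) : AlgebraicClosure ℚ_[p]) := ⟨Nat.cast_ne_zero.2 hnp⟩
  have hprim : IsPrimitiveRoot η (n * p) := by
    rw [← isRoot_cyclotomic_iff, ← map_cyclotomic (n * p) (algebraMap ℚ_[p] _), IsRoot.def,
      eval_map_algebraMap, hprod, map_prod]
    exact Finset.prod_eq_zero (Finset.mem_univ i) hη
  have hprim' : IsPrimitiveRoot (η ^ p) n := hprim.pow (Nat.pos_of_ne_zero hnp) (mul_comm _ _)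
  have d1 := aux_deg p m hm _ (a + 1) η (by
    have : p ^ (a + 1) * m = n * p := by rw [hnm]; ring
    rwa [this])
  have d2 := aux_deg p m hm _ a (η ^ p) (by rwa [← hnm])
  rw [← pow_mul, ← pow_succ', ← minpoly.eq_of_irreducible_of_monic (hirr i) hηF (hmonic i)] at d2
  have hηi : IsIntegral ℚ_[p] η := ⟨G i, hGm i, hη⟩
  have hle : (G i).natDegree ≤ (minpoly ℚ_[p] η).natDegree := by
    have h2 : 0 < Nat.totient (p ^ a) := Nat.totient_pos.2 (pow_pos hp.pos _)
    apply le_of_eq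
    apply Nat.eq_of_mul_eq_mul_right h2
    rw [hdeg, d1, d2]
    ring
  rw [eq_of_monic_of_dvd_of_natDegree_le (minpoly.monic hηi) (hGm i) (minpoly.dvd _ _ hη) hle]
  exact minpoly.irreducible hηi
end
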